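/- Let T be a ℂ-linear map on the n×n complex matrices and let T† be its adjoint with respect to the Hilbert–Schmidt inner product ⟨A, B⟩ = Tr(Aᴴ B). Let C : ℕ → Matrix be a family of Hermitian matrices such that Tr(C(m+s) · T^m(ρ)) = Tr(C(s) · ρ) for every density matrix ρ and all m, s ∈ ℕ. Then C(s) = (T†)^m(C(m+s)) for all m, s ∈ ℕ; that is, every constant of motion is a reversed-time trajectory of the Heisenberg-picture dynamics. -/

import Mathlib

open Matrix ComplexOrder

/-!
Every complex matrix is a linear combination of positive semidefinite matrices, hence of density
matrices, so a matrix `A` is determined by the values `Tr (A * ρ)` on density matrices `ρ`.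
Since `C (m + s)` is Hermitian, conservation and adjointness give
`Tr (C s * ρ) = Tr (C (m + s) * T^[m] ρ) = Tr (((T†)^[m] (C (m + s)))ᴴ * ρ)`, so that
`C s = ((T†)^[m] (C (m + s)))ᴴ`, and hermiticity of `C s` removes the conjugate transpose.
-/

theorem iterate_adjoint_apply {α β γ : Type*} {p : α → β → γ} {f : α → α} {g : β → β}
    (hadj : ∀ a b, p (f a) b = p a (g b)) (m : ℕ) (a : α) (b : β) :
    p (f^[m] a) b = p a (g^[m] b) := by
  induction m generalizing a with
  | zero => rfl
  | succ m ih => rw [Function.iterate_succ_apply, ih, hadj, ← Function.iterate_succ_apply' g]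

section DensityMatrices

variable {ι κ : Type*} [Fintype ι] [Fintype κ]

variable (ι) in
/-- The density matrices (quantum states) on `ℂ^ι`: the positive semidefinite matrices of trace
one. They are kept as a set of matrices so that one can speak of their linear span. -/
def densityMatrices : Set (Matrix ι ι ℂ) :=
  {ρ | ρ.PosSemidef ∧ ρ.trace = 1}

theorem inv_trace_smul_mem_densityMatrices {A : Matrix ι ι ℂ} (hA : A.PosSemidef)
    (htrace : A.trace ≠ 0) : A.trace⁻¹ • A ∈ densityMatrices ι := by
  refine ⟨hA.smul (inv_nonneg.mpr hA.trace_nonneg), ?_⟩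
  rw [trace_smul, smul_eq_mul, inv_mul_cancel₀ htrace]

theorem posSemidef_mem_span_densityMatrices {A : Matrix ι ι ℂ} (hA : A.PosSemidef) :
    A ∈ Submodule.span ℂ (densityMatrices ι) := by
  rcases eq_or_ne A.trace 0 with htrace | htrace
  · rw [hA.trace_eq_zero_iff.mp htrace]
    exact Submodule.zero_mem _
  · rw [← smul_inv_smul₀ htrace A]
    exact Submodule.smul_mem _ _
      (Submodule.subset_span (inv_trace_smul_mem_densityMatrices hA htrace))

open scoped Matrix.Norms.L2Operator MatrixOrder in
theorem span_densityMatrices : Submodule.span ℂ (densityMatrices ι) = ⊤ := by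
  classical
  rw [eq_top_iff, ← CStarAlgebra.span_nonneg, Submodule.span_le]
  exact fun A hA => posSemidef_mem_span_densityMatrices (nonneg_iff_posSemidef.mp hA)

theorem eq_of_trace_mul_densityMatrix_eq {A B : Matrix ι ι ℂ}
    (h : ∀ ρ ∈ densityMatrices ι, (A * ρ).trace = (B * ρ).trace) : A = B := by
  have hfun : traceLinearMap ι ℂ ℂ ∘ₗ LinearMap.mulLeft ℂ A =
      traceLinearMap ι ℂ ℂ ∘ₗ LinearMap.mulLeft ℂ B :=
    LinearMap.ext_on span_densityMatrices h
  exact ext_iff_trace_mul_right.mpr fun X => LinearMap.congr_fun hfun X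

theorem eq_adjoint_apply_of_trace_mul_eq {T : Matrix ι ι ℂ → Matrix κ κ ℂ}
    {Tdag : Matrix κ κ ℂ → Matrix ι ι ℂ}
    (hadj : ∀ A B, ((Tdag A)ᴴ * B).trace = (Aᴴ * T B).trace)
    {A : Matrix κ κ ℂ} {B : Matrix ι ι ℂ} (hA : A.IsHermitian) (hB : B.IsHermitian)
    (h : ∀ ρ ∈ densityMatrices ι, (A * T ρ).trace = (B * ρ).trace) : B = Tdag A := by
  refine conjTranspose_injective (eq_of_trace_mul_densityMatrix_eq fun ρ hρ => ?_)
  rw [hB.eq, hadj, hA.eq, h ρ hρ]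

theorem constant_of_motion_is_heisenberg_trajectory_general
    {T Tdag : Matrix ι ι ℂ → Matrix ι ι ℂ}
    (hadj : ∀ A B, ((Tdag A)ᴴ * B).trace = (Aᴴ * T B).trace)
    {C : ℕ → Matrix ι ι ℂ} (hherm : ∀ m, (C m).IsHermitian)
    (hcom : ∀ ρ ∈ densityMatrices ι, ∀ m s : ℕ,
      (C (m + s) * T^[m] ρ).trace = (C s * ρ).trace) (m s : ℕ) :
    C s = Tdag^[m] (C (m + s)) :=
  eq_adjoint_apply_of_trace_mul_eq
    (iterate_adjoint_apply (p := fun A B : Matrix ι ι ℂ => (Aᴴ * B).trace) hadj m)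
    (hherm (m + s)) (hherm s) fun ρ hρ => hcom ρ hρ m s

end DensityMatrices

/-- **Constants of motion are reversed-time Heisenberg trajectories.**
Let `T` be linear with Hilbert–Schmidt adjoint `T†` (so that `Tr((T† A)ᴴ * B) = Tr(Aᴴ * T B)`
for all `A`, `B`).  If `C : ℕ → Matrix` is a family of Hermitian matrices with
`Tr (C (m+s) * T^[m] ρ) = Tr (C s * ρ)` for every density matrix `ρ`, then
`C s = (T†)^[m] (C (m+s))` for all `m, s`. -/
theorem constant_of_motion_is_heisenberg_trajectory {n : ℕ}
    (T Tdag : Matrix (Fin n) (Fin n) ℂ →ₗ[ℂ] Matrix (Fin n) (Fin n) ℂ)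
    (hadj : ∀ A B : Matrix (Fin n) (Fin n) ℂ,
      ((Tdag A)ᴴ * B).trace = (Aᴴ * T B).trace)
    (C : ℕ → Matrix (Fin n) (Fin n) ℂ)
    (hherm : ∀ m : ℕ, (C m).IsHermitian)
    (hcom : ∀ (ρ : Matrix (Fin n) (Fin n) ℂ), ρ.PosSemidef → ρ.trace = 1 →
      ∀ m s : ℕ, (C (m + s) * (⇑T)^[m] ρ).trace = (C s * ρ).trace) :
    ∀ m s : ℕ, C s = (⇑Tdag)^[m] (C (m + s)) :=
  constant_of_motion_is_heisenberg_trajectory_general hadj hherm fun ρ hρ => hcom ρ hρ.1 hρ.2
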